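/- For γ ∈ (0,1) real and t > 0, the Mittag-Leffler function satisfies 1/(1 + Γ(1−γ)·t) ≤ E_{γ,1}(−t); in particular E_{γ,1}(−t) > 0 for all t > 0, where E_{γ,1}(z) = Σ_{k≥0} z^k / Γ(γk + 1). -/

import Mathlib

/-!
Write `E_{γ,c}(z) = ∑ z ^ k / Γ(γ k + c)` and `v(s) = s ^ (γ - 1) * E_{γ,γ}(-t s ^ γ)`, so that `t v`
is the negative derivative of `s ↦ E_{γ,1}(-t s ^ γ)`. Integrating termwise with Euler's beta
integral (`integral_conv`) gives
`∫₀¹ v = E_{γ,γ+1}(-t) = (1 - E_{γ,1}(-t)) / t` and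
`∫₀¹ (1 - s) ^ (-γ) v(s) ds = Γ(1 - γ) E_{γ,1}(-t)`.
If `v ≥ 0`, the first integral is at most the second because `(1 - s) ^ (-γ) ≥ 1`; rearranged, this
is the claimed lower bound, and positivity of `E_{γ,1}(-t)` follows from it.

The positivity of `v` (`mlTwo_self_pos`) comes from the Volterra equation `Γ(γ) v + t (k ⋆ v) = k`
with the log-convex kernel `k(s) = s ^ (γ - 1)`. Let `T` be the first zero
of `v`. Log-convexity gives `k(T - s) / k(τ - s) ≤ k(T) / k(τ)` for `s < τ < T`, which compares the
equation at `T` with the equation at `τ`: up to the part of the convolution over `[τ, T]`, `v(T)` is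
at least `k(T) / k(τ) * v(τ)`. Taking `τ` to be a maximum point of `v` on a short interval
`[T - δ, T]` makes that part at most half of this quantity, so `v(T) > 0`, a contradiction.
-/

/-- The classical Mittag-Leffler function `E_{γ,1}`. -/
noncomputable def mittagLeffler (γ z : ℝ) : ℝ :=
  ∑' k : ℕ, z ^ k / Real.Gamma (γ * k + 1)

/-- The two-parameter Mittag-Leffler function `E_{γ,c}(z) = ∑ z ^ k / Γ(γ k + c)`. -/
noncomputable def mlTwo (γ c z : ℝ) : ℝ :=
  ∑' k : ℕ, z ^ k / Real.Gamma (γ * k + c)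

lemma mittagLeffler_eq_mlTwo (γ z : ℝ) : mittagLeffler γ z = mlTwo γ 1 z := rfl

/-! ### Euler's beta integral -/

open MeasureTheory Set in
/-- Euler's beta integral on `(0, x]`, as a real integral. -/
lemma integral_beta_scaled {p q x : ℝ} (hp : 0 < p) (hq : 0 < q) (hx : 0 < x) :
    ∫ s in Ioc 0 x, s ^ (p - 1) * (x - s) ^ (q - 1) =
      x ^ (p + q - 1) * (Real.Gamma p * Real.Gamma q / Real.Gamma (p + q)) := by
  have h := Complex.betaIntegral_scaled (p : ℂ) (q : ℂ) hx
  rw [Complex.betaIntegral_eq_Gamma_mul_div _ _ (by simpa) (by simpa),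
    intervalIntegral.integral_of_le hx.le] at h
  have h2 : ∫ s in Ioc 0 x, (s : ℂ) ^ ((p : ℂ) - 1) * ((x : ℂ) - s) ^ ((q : ℂ) - 1) =
      ∫ s in Ioc 0 x, ((s ^ (p - 1) * (x - s) ^ (q - 1) : ℝ) : ℂ) := by
    refine setIntegral_congr_fun measurableSet_Ioc fun s hs => ?_
    rw [Complex.ofReal_mul, Complex.ofReal_cpow hs.1.le, Complex.ofReal_cpow (by linarith [hs.2])]
    push_cast
    rfl
  rw [h2, integral_complex_ofReal] at h
  rw [← Complex.ofReal_add, Complex.Gamma_ofReal, Complex.Gamma_ofReal, Complex.Gamma_ofReal,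
    ← Complex.ofReal_one, ← Complex.ofReal_sub, ← Complex.ofReal_cpow hx.le] at h
  exact_mod_cast h

open MeasureTheory Set in
lemma integrableOn_beta {p q x : ℝ} (hp : 0 < p) (hq : 0 < q) (hx : 0 < x) :
    IntegrableOn (fun s => s ^ (p - 1) * (x - s) ^ (q - 1)) (Ioc 0 x) := by
  -- A non-integrable function would have integral `0`.
  refine Integrable.of_integral_ne_zero ?_
  rw [integral_beta_scaled hp hq hx]
  have := Real.Gamma_pos_of_pos hp
  have := Real.Gamma_pos_of_pos hq
  have := Real.Gamma_pos_of_pos (add_pos hp hq)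
  positivity

/-! ### Growth of the Gamma function and the two-parameter series -/

/-- Log-convexity of `Γ`, compared on `[x - 1, x]` and `[x, x + γ]`. -/
lemma rpow_mul_Gamma_le {γ x : ℝ} (hγ : 0 < γ) (hx : 1 < x) :
    (x - 1) ^ γ * Real.Gamma x ≤ Real.Gamma (x + γ) := by
  have h1 : 0 < x - 1 := by linarith
  have h := Real.convexOn_log_Gamma.slope_mono_adjacent (x := x - 1) (y := x) (z := x + γ)
    (by simpa using h1) (by simp only [Set.mem_Ioi]; linarith) (by linarith) (by linarith)
  have hG := Real.Gamma_pos_of_pos h1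
  have hGx := Real.Gamma_pos_of_pos (show 0 < x by linarith)
  have hGy := Real.Gamma_pos_of_pos (show 0 < x + γ by linarith)
  have hrec : Real.Gamma x = (x - 1) * Real.Gamma (x - 1) := by
    simpa using Real.Gamma_add_one h1.ne'
  have hl : Real.log (Real.Gamma x) = Real.log (x - 1) + Real.log (Real.Gamma (x - 1)) := by
    rw [hrec, Real.log_mul h1.ne' hG.ne']
  simp only [Function.comp_apply, sub_sub_cancel, div_one, add_sub_cancel_left] at h
  rw [hl, le_div_iff₀ hγ] at h
  rw [← Real.log_le_log_iff (by positivity) hGy, Real.log_mul (by positivity) hGx.ne',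
    Real.log_rpow h1]
  linarith

open Filter Topology in
lemma summable_mlTwo {γ c : ℝ} (hγ : 0 < γ) (hc : 0 < c) (z : ℝ) :
    Summable fun k : ℕ => z ^ k / Real.Gamma (γ * k + c) := by
  rcases eq_or_ne z 0 with rfl | hz
  · refine summable_of_ne_finset_zero (s := {0}) fun k hk => ?_
    simp at hk
    simp [hk]
  have hpos : ∀ k : ℕ, 0 < Real.Gamma (γ * k + c) := fun k => Real.Gamma_pos_of_pos (by positivity)
  have hlin : Tendsto (fun k : ℕ => γ * (k : ℝ) + (c - 1)) atTop atTop :=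
    tendsto_atTop_add_const_right _ _ (tendsto_natCast_atTop_atTop.const_mul_atTop hγ)
  refine summable_of_ratio_test_tendsto_lt_one (l := 0) one_pos
    (Eventually.of_forall fun k => div_ne_zero (pow_ne_zero _ hz) (hpos k).ne') ?_
  have hlim : Tendsto (fun k : ℕ => |z| / (γ * (k : ℝ) + (c - 1)) ^ γ) atTop (𝓝 0) :=
    tendsto_const_nhds.div_atTop ((tendsto_rpow_atTop hγ).comp hlin)
  refine squeeze_zero' (Eventually.of_forall fun k => by positivity) ?_ hlim
  filter_upwards [hlin.eventually_gt_atTop 0] with k hk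
  have h := rpow_mul_Gamma_le hγ (x := γ * k + c) (by linarith)
  have e : γ * ((k + 1 : ℕ) : ℝ) + c = γ * k + c + γ := by push_cast; ring
  rw [norm_div, norm_div, norm_pow, norm_pow, Real.norm_of_nonneg (hpos k).le,
    Real.norm_of_nonneg (hpos (k + 1)).le, e, Real.norm_eq_abs]
  rw [show γ * k + c - 1 = γ * k + (c - 1) by ring] at h
  have h2 := hpos k
  have h3 : 0 < Real.Gamma (γ * k + c + γ) := by have := hpos (k + 1); rwa [e] at this
  have h4 : 0 < |z| := abs_pos.2 hz
  rw [show |z| ^ (k + 1) / Real.Gamma (γ * k + c + γ) / (|z| ^ k / Real.Gamma (γ * k + c)) =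
    |z| * (Real.Gamma (γ * k + c) / Real.Gamma (γ * k + c + γ)) by field_simp; ring,
    div_eq_mul_inv |z|]
  gcongr
  rw [div_le_iff₀ h3, inv_mul_eq_div, le_div_iff₀ (by positivity)]
  linarith

lemma mlTwo_recurrence {γ c : ℝ} (hγ : 0 < γ) (hc : 0 < c) (z : ℝ) :
    mlTwo γ c z = 1 / Real.Gamma c + z * mlTwo γ (c + γ) z := by
  unfold mlTwo
  rw [(summable_mlTwo hγ hc z).tsum_eq_zero_add, ← tsum_mul_left]
  congr 1
  · simp
  · refine tsum_congr fun k => ?_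
    rw [show γ * ((k + 1 : ℕ) : ℝ) + c = γ * k + (c + γ) by push_cast; ring]
    ring

lemma continuous_mlTwo {γ c : ℝ} (hγ : 0 < γ) (hc : 0 < c) : Continuous (mlTwo γ c) := by
  rw [continuous_iff_continuousAt]
  intro z
  have hcont : ContinuousOn (mlTwo γ c) (Set.Icc (z - 1) (z + 1)) := by
    refine continuousOn_tsum (fun k => by fun_prop) (summable_mlTwo hγ hc (|z| + 1)) ?_
    intro k y hy
    have hG : 0 < Real.Gamma (γ * k + c) := Real.Gamma_pos_of_pos (by positivity)
    rw [norm_div, norm_pow, Real.norm_of_nonneg hG.le, Real.norm_eq_abs]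
    gcongr
    rw [abs_le]
    constructor <;> linarith [hy.1, hy.2, neg_abs_le z, le_abs_self z]
  exact hcont.continuousAt (Icc_mem_nhds (by linarith) (by linarith))

/-! ### Fractional integrals of Mittag-Leffler functions -/

open MeasureTheory Set in
lemma integrableOn_conv {γ c a x t : ℝ} (hγ : 0 < γ) (hc : 0 < c) (ha : 0 < a) (hx : 0 < x) :
    IntegrableOn (fun s => (x - s) ^ (a - 1) * (s ^ (c - 1) * mlTwo γ c (t * s ^ γ)))
      (Ioc 0 x) := by
  have hcont : ContinuousOn (fun s : ℝ => mlTwo γ c (t * s ^ γ)) (Icc 0 x) :=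
    ((continuous_mlTwo hγ hc).comp
      (continuous_const.mul (Real.continuous_rpow_const hγ.le))).continuousOn
  refine ((integrableOn_beta hc ha hx).mul_continuousOn_of_subset hcont measurableSet_Ioc
    isCompact_Icc Ioc_subset_Icc_self).congr_fun (fun s _ => ?_) measurableSet_Ioc
  simp only []
  ring

open MeasureTheory Set in
/-- The Riemann-Liouville fractional integral of order `a` raises the second parameter of
`s ^ (c - 1) * E_{γ,c}(t s ^ γ)` by `a`, as termwise integration shows. -/
lemma integral_conv {γ c a x t : ℝ} (hγ : 0 < γ) (hc : 0 < c) (ha : 0 < a) (hx : 0 < x) :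
    ∫ s in Ioc 0 x, (x - s) ^ (a - 1) * (s ^ (c - 1) * mlTwo γ c (t * s ^ γ)) =
      Real.Gamma a * x ^ (c + a - 1) * mlTwo γ (c + a) (t * x ^ γ) := by
  have hG : ∀ k : ℕ, 0 < Real.Gamma (γ * k + c) := fun k => Real.Gamma_pos_of_pos (by positivity)
  set F : ℝ → ℕ → ℝ → ℝ := fun r k s =>
    r ^ k / Real.Gamma (γ * k + c) * (s ^ (γ * k + c - 1) * (x - s) ^ (a - 1)) with hF
  have hpw : ∀ s ∈ Ioc 0 x, ∀ k : ℕ, F t k s =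
      (x - s) ^ (a - 1) * s ^ (c - 1) * ((t * s ^ γ) ^ k / Real.Gamma (γ * k + c)) := by
    intro s hs k
    simp only [hF]
    rw [show γ * k + c - 1 = (c - 1) + γ * k by ring, Real.rpow_add hs.1, Real.rpow_mul hs.1.le,
      Real.rpow_natCast, mul_pow]
    ring
  have hint : ∀ r k, ∫ s in Ioc 0 x, F r k s =
      Real.Gamma a * x ^ (c + a - 1) * ((r * x ^ γ) ^ k / Real.Gamma (γ * k + (c + a))) := by
    intro r k
    simp only [hF]
    rw [integral_const_mul, integral_beta_scaled (by positivity) ha hx,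
      show γ * k + c + a - 1 = (c + a - 1) + γ * k by ring, Real.rpow_add hx,
      Real.rpow_mul hx.le, Real.rpow_natCast, mul_pow, show γ * k + c + a = γ * k + (c + a) by ring]
    have := (hG k).ne'
    field_simp
  have hFi : ∀ k, IntegrableOn (F t k) (Ioc 0 x) := fun k =>
    (integrableOn_beta (p := γ * k + c) (by positivity) ha hx).const_mul _
  have hnorm : ∀ k, ∫ s in Ioc 0 x, ‖F t k s‖ = ∫ s in Ioc 0 x, F |t| k s := by
    intro k
    refine setIntegral_congr_fun measurableSet_Ioc fun s hs => ?_
    have h1 : 0 ≤ x - s := by linarith [hs.2]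
    have h2 := hs.1.le
    simp only [hF]
    rw [norm_mul, norm_div, norm_pow, Real.norm_of_nonneg (hG k).le, Real.norm_eq_abs,
      Real.norm_of_nonneg (by positivity)]
  have hs := hasSum_integral_of_summable_integral_norm (μ := volume.restrict (Ioc 0 x)) hFi (by
    simp_rw [hnorm, hint]
    exact (summable_mlTwo hγ (by positivity) _).mul_left _)
  simp_rw [hint] at hs
  rw [mlTwo, ← tsum_mul_left, hs.tsum_eq]
  refine setIntegral_congr_fun measurableSet_Ioc fun s hs' => ?_
  rw [tsum_congr (hpw s hs'), tsum_mul_left, mlTwo]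
  ring

open MeasureTheory Set in
/-- The function `v(s) = s ^ (γ - 1) * E_{γ,γ}(-t s ^ γ)` solves the Volterra equation
`Γ(γ) v + t (k ⋆ v) = k` with kernel `k(s) = s ^ (γ - 1)`. -/
lemma volterra {γ t x : ℝ} (hγ : 0 < γ) (hx : 0 < x) :
    Real.Gamma γ * (x ^ (γ - 1) * mlTwo γ γ (-t * x ^ γ)) = x ^ (γ - 1) -
      t * ∫ s in Ioc 0 x, (x - s) ^ (γ - 1) * (s ^ (γ - 1) * mlTwo γ γ (-t * s ^ γ)) := by
  rw [integral_conv hγ hγ hγ hx, mlTwo_recurrence hγ hγ,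
    show γ + γ - 1 = (γ - 1) + γ by ring, Real.rpow_add hx]
  have := (Real.Gamma_pos_of_pos hγ).ne'
  field_simp
  ring

/-! ### Positivity of `E_{γ,γ}` on the negative axis -/

open MeasureTheory Set in
lemma integral_kernel_tail {γ τ T : ℝ} (hγ : 0 < γ) (h : τ < T) :
    ∫ s in Ioc τ T, (T - s) ^ (γ - 1) = (T - τ) ^ γ / γ := by
  rw [← intervalIntegral.integral_of_le h.le,
    intervalIntegral.integral_comp_sub_left (fun u => u ^ (γ - 1)) T,
    integral_rpow (Or.inl (by linarith))]
  simp [Real.zero_rpow hγ.ne']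

open MeasureTheory Set in
/-- A first zero `T` of `v(s) = s ^ (γ - 1) * E_{γ,γ}(-t s ^ γ)` is impossible: the Volterra equations
at `T` and at a maximum point `τ` of `v` slightly to the left of `T` force `v T > 0`. -/
lemma mlTwo_self_pos {γ t x₀ : ℝ} (hγ : 0 < γ) (hγ1 : γ < 1) (ht : 0 < t) (hx₀ : 0 < x₀) :
    0 < mlTwo γ γ (-t * x₀ ^ γ) := by
  by_contra! hneg
  have hΓ : 0 < Real.Gamma γ := Real.Gamma_pos_of_pos hγ
  set W : ℝ → ℝ := fun s => mlTwo γ γ (-t * s ^ γ) with hW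
  have hWc : Continuous W :=
    (continuous_mlTwo hγ hγ).comp (continuous_const.mul (Real.continuous_rpow_const hγ.le))
  obtain ⟨T, ⟨⟨hT0, hTx⟩, hWT⟩, hTmin⟩ :=
    (isCompact_Icc.inter_right (isClosed_le hWc continuous_const) :
      IsCompact (Icc 0 x₀ ∩ {s | W s ≤ 0})).exists_isLeast ⟨x₀, ⟨hx₀.le, le_rfl⟩, hneg⟩
  have hW0 : 0 < W 0 := by
    simp only [hW]
    rw [Real.zero_rpow hγ.ne', mul_zero, mlTwo_recurrence hγ hγ]
    simpa using hΓ
  have hTpos : 0 < T := hT0.lt_of_ne (by rintro rfl; exact absurd hWT (not_le.2 hW0))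
  have hWpos : ∀ s, 0 < s → s < T → 0 < W s := by
    intro s h0 h1
    by_contra! h
    exact absurd (hTmin ⟨⟨h0.le, h1.le.trans hTx⟩, h⟩) (not_le.2 h1)
  set v : ℝ → ℝ := fun s => s ^ (γ - 1) * W s with hv
  have hvpos : ∀ s, 0 < s → s < T → 0 < v s := fun s h0 h1 =>
    mul_pos (Real.rpow_pos_of_pos h0 _) (hWpos s h0 h1)
  have hvT : v T ≤ 0 := mul_nonpos_of_nonneg_of_nonpos (by positivity) hWT
  have hvolt : ∀ x, 0 < x → Real.Gamma γ * v x = x ^ (γ - 1) -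
      t * ∫ s in Ioc 0 x, (x - s) ^ (γ - 1) * v s := fun x hx => volterra hγ hx
  have hvint : ∀ x, 0 < x → IntegrableOn (fun s => (x - s) ^ (γ - 1) * v s) (Ioc 0 x) :=
    fun x hx => integrableOn_conv hγ hγ hγ hx
  -- `t` times the integral of the kernel over an interval `(0, δ]` is at most `Γ(γ) / 4`; the kernel
  -- changes by a factor of at most `2` on `[T / 2, T]`, so `Γ(γ) / 2` would be borderline.
  obtain ⟨δ, hδ0, hδT, hδ⟩ : ∃ δ : ℝ, 0 < δ ∧ δ ≤ T / 2 ∧ t * (δ ^ γ / γ) ≤ Real.Gamma γ / 4 := by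
    set c := γ * Real.Gamma γ / (4 * t) with hc
    have hc0 : 0 < c := by positivity
    refine ⟨min (T / 2) (c ^ γ⁻¹), lt_min (by positivity) (by positivity), min_le_left _ _, ?_⟩
    have h1 : (min (T / 2) (c ^ γ⁻¹)) ^ γ ≤ c := by
      calc _ ≤ (c ^ γ⁻¹) ^ γ :=
            Real.rpow_le_rpow (le_min (by positivity) (by positivity)) (min_le_right _ _) hγ.le
        _ = c := Real.rpow_inv_rpow hc0.le hγ.ne'
    calc _ ≤ t * (c / γ) := by gcongr
      _ = _ := by rw [hc]; field_simp
  have hvc : ContinuousOn v (Icc (T - δ) T) := by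
    refine ContinuousOn.mul (fun s hs => ?_) hWc.continuousOn
    exact (Real.continuousAt_rpow_const _ _
      (Or.inl (by linarith [hs.1] : 0 < s).ne')).continuousWithinAt
  obtain ⟨τ, ⟨hτ1, hτ2⟩, hmax⟩ := isCompact_Icc.exists_isMaxOn ⟨T - δ, ⟨le_rfl, by linarith⟩⟩ hvc
  have hvτ : 0 < v τ := (hvpos (T - δ) (by linarith) (by linarith)).trans_le
    (hmax ⟨le_rfl, by linarith⟩)
  have hτT : τ < T := hτ2.lt_of_ne (by rintro rfl; linarith)
  have hτ0 : 0 < τ := by linarith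
  have hkτ : 0 < τ ^ (γ - 1) := Real.rpow_pos_of_pos hτ0 _
  have hkT : 0 < T ^ (γ - 1) := Real.rpow_pos_of_pos hTpos _
  have hsub1 : Ioc 0 τ ⊆ Ioc 0 T := Ioc_subset_Ioc_right hτT.le
  have hsub2 : Ioc τ T ⊆ Ioc 0 T := Ioc_subset_Ioc_left hτ0.le
  have hsplit : ∫ s in Ioc 0 T, (T - s) ^ (γ - 1) * v s =
      (∫ s in Ioc 0 τ, (T - s) ^ (γ - 1) * v s) + ∫ s in Ioc τ T, (T - s) ^ (γ - 1) * v s := by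
    rw [← Ioc_union_Ioc_eq_Ioc hτ0.le hτT.le]
    exact setIntegral_union (Ioc_disjoint_Ioc_of_le le_rfl) measurableSet_Ioc
      ((hvint T hTpos).mono_set hsub1) ((hvint T hTpos).mono_set hsub2)
  -- Log-convexity of the kernel: `k(T - s) * k(τ) ≤ k(T) * k(τ - s)`.
  have hB : τ ^ (γ - 1) * ∫ s in Ioc 0 τ, (T - s) ^ (γ - 1) * v s ≤
      T ^ (γ - 1) * ∫ s in Ioc 0 τ, (τ - s) ^ (γ - 1) * v s := by
    -- The endpoint is dropped because `0 ^ (γ - 1)` has the junk value `0`.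
    rw [integral_Ioc_eq_integral_Ioo, integral_Ioc_eq_integral_Ioo,
      ← integral_const_mul, ← integral_const_mul]
    refine setIntegral_mono_on ?_ ?_ measurableSet_Ioo fun s hs => ?_
    · exact ((hvint T hTpos).mono_set (Ioo_subset_Ioc_self.trans hsub1)).const_mul _
    · exact ((hvint τ hτ0).mono_set Ioo_subset_Ioc_self).const_mul _
    · have hs1 := hs.1
      have hs2 := hs.2
      rw [← mul_assoc (τ ^ (γ - 1)) _ (v s), ← mul_assoc (T ^ (γ - 1)) _ (v s)]
      refine mul_le_mul_of_nonneg_right ?_ (hvpos s hs1 (hs2.trans hτT)).le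
      rw [← Real.mul_rpow hτ0.le (by linarith), ← Real.mul_rpow hTpos.le (by linarith)]
      exact Real.rpow_le_rpow_of_nonpos (mul_pos hTpos (by linarith)) (by nlinarith) (by linarith)
  have hC : ∫ s in Ioc τ T, (T - s) ^ (γ - 1) * v s ≤ v τ * (δ ^ γ / γ) := by
    calc _ ≤ ∫ s in Ioc τ T, (T - s) ^ (γ - 1) * v τ := by
          refine setIntegral_mono_on ((hvint T hTpos).mono_set hsub2) ?_ measurableSet_Ioc
            fun s hs => ?_
          · refine Integrable.mul_const (Integrable.of_integral_ne_zero ?_) _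
            rw [integral_kernel_tail hγ hτT]
            have : 0 < T - τ := by linarith
            positivity
          · exact mul_le_mul_of_nonneg_left (hmax ⟨hτ1.trans hs.1.le, hs.2⟩)
              (Real.rpow_nonneg (by linarith [hs.2]) _)
      _ = v τ * ((T - τ) ^ γ / γ) := by
          rw [integral_mul_const, integral_kernel_tail hγ hτT, mul_comm]
      _ ≤ _ := by
          have : 0 ≤ T - τ := by linarith
          have : T - τ ≤ δ := by linarith
          gcongr
  have hhalf : τ ^ (γ - 1) ≤ 2 * T ^ (γ - 1) := by
    have h1 : τ ^ (γ - 1) ≤ (T / 2) ^ (γ - 1) :=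
      Real.rpow_le_rpow_of_nonpos (by positivity) (by linarith) (by linarith)
    have h2 : (2 : ℝ)⁻¹ ≤ 2 ^ (γ - 1) := by
      rw [← Real.rpow_neg_one]
      exact Real.rpow_le_rpow_of_exponent_le (by norm_num) (by linarith)
    rw [Real.div_rpow hTpos.le (by norm_num)] at h1
    refine h1.trans ?_
    rw [div_le_iff₀ (by positivity)]
    nlinarith
  have e1 := hvolt τ hτ0
  have e2 := hvolt T hTpos
  rw [hsplit] at e2
  set A := ∫ s in Ioc 0 τ, (τ - s) ^ (γ - 1) * v s
  set B := ∫ s in Ioc 0 τ, (T - s) ^ (γ - 1) * v s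
  set C := ∫ s in Ioc τ T, (T - s) ^ (γ - 1) * v s
  have hC' : t * C ≤ v τ * (Real.Gamma γ / 4) := by
    calc t * C ≤ t * (v τ * (δ ^ γ / γ)) := by gcongr
      _ = v τ * (t * (δ ^ γ / γ)) := by ring
      _ ≤ _ := by gcongr
  have hkey : T ^ (γ - 1) * (Real.Gamma γ * v τ) - τ ^ (γ - 1) * (v τ * (Real.Gamma γ / 4)) ≤
      τ ^ (γ - 1) * (Real.Gamma γ * v T) := by
    rw [e2, e1]
    have h1 := mul_le_mul_of_nonneg_left hB ht.le
    have h2 := mul_le_mul_of_nonneg_left hC' hkτ.le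
    linarith
  have hpos : 0 < Real.Gamma γ * v τ := by positivity
  have h3 : τ ^ (γ - 1) * (Real.Gamma γ * v T) ≤ 0 :=
    mul_nonpos_of_nonneg_of_nonpos hkτ.le (mul_nonpos_of_nonneg_of_nonpos hΓ.le hvT)
  have h4 := mul_le_mul_of_nonneg_right hhalf hpos.le
  have h5 := mul_pos hkT hpos
  linarith

/-! ### The lower bound -/

open MeasureTheory Set in
/-- Comparison of `∫₀¹ v` with `∫₀¹ (1 - s) ^ (-γ) v(s) ds` for `v(s) = s ^ (γ-1) E_{γ,γ}(-t s ^ γ)`: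
`v` is positive and the weight is at least `1`. -/
lemma mlTwo_add_one_le {γ t : ℝ} (hγ : 0 < γ) (hγ1 : γ < 1) (ht : 0 < t) :
    mlTwo γ (γ + 1) (-t) ≤ Real.Gamma (1 - γ) * mlTwo γ 1 (-t) := by
  have h1 := integral_conv (t := -t) hγ hγ one_pos one_pos
  have h2 := integral_conv (t := -t) hγ hγ (sub_pos.2 hγ1) one_pos
  simp only [Real.one_rpow, mul_one, add_sub_cancel, Real.Gamma_one, one_mul] at h1 h2
  rw [← h1, ← h2, integral_Ioc_eq_integral_Ioo, integral_Ioc_eq_integral_Ioo]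
  refine setIntegral_mono_on ?_ ?_ measurableSet_Ioo fun s hs => ?_
  · exact (integrableOn_conv hγ hγ one_pos one_pos).mono_set Ioo_subset_Ioc_self
  · exact (integrableOn_conv hγ hγ (sub_pos.2 hγ1) one_pos).mono_set Ioo_subset_Ioc_self
  · have hs1 := hs.1
    have hs2 := hs.2
    refine mul_le_mul_of_nonneg_right ?_
      (mul_pos (Real.rpow_pos_of_pos hs1 _) (mlTwo_self_pos hγ hγ1 ht hs1)).le
    exact Real.rpow_le_rpow_of_exponent_ge (by linarith) (by linarith) (by linarith)

theorem stmt_5 (γ : ℝ) (hγ : γ ∈ Set.Ioo (0:ℝ) 1) (t : ℝ) (ht : 0 < t) :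
    1 / (1 + Real.Gamma (1 - γ) * t) ≤ mittagLeffler γ (-t) ∧
    0 < mittagLeffler γ (-t) := by
  obtain ⟨hγ0, hγ1⟩ := hγ
  have hΓ : 0 < Real.Gamma (1 - γ) := Real.Gamma_pos_of_pos (sub_pos.2 hγ1)
  have hle : 1 / (1 + Real.Gamma (1 - γ) * t) ≤ mittagLeffler γ (-t) := by
    rw [mittagLeffler_eq_mlTwo, div_le_iff₀ (by positivity)]
    have hrec := mlTwo_recurrence hγ0 one_pos (-t)
    rw [Real.Gamma_one, add_comm 1 γ] at hrec
    have h := mul_le_mul_of_nonneg_left (mlTwo_add_one_le hγ0 hγ1 ht) ht.le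
    linarith
  exact ⟨hle, lt_of_lt_of_le (by positivity) hle⟩
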